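/- Let q be an odd prime power and F_q the finite field with q elements. There exist constants C > 0 and c > 0 such that the following holds: if E ⊆ F_q² and ρ is a real number with C/√q ≤ ρ ≤ 1 and |E| ≥ ρq², then |T₃(E)| > cρq³, where T₃(E) is the set of equivalence classes of triples (x,y,z) ∈ E × E × E under the equivalence relation (x,y,z) ∼ (x',y',z') iff there exist τ ∈ F_q² and O ∈ SO₂(F_q) (a 2×2 matrix over F_q with OᵀO = I and det O = 1) such that (x',y',z') = (Ox + τ, Oy + τ, Oz + τ). -/

import Mathlib

open Matrix

/-- The equivalence relation on triples: `(x,y,z) ∼ (x',y',z')` iff there exist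
`τ ∈ F_q²` and `O ∈ SO₂(F_q)` with `(x',y',z') = (Ox + τ, Oy + τ, Oz + τ)`. -/
def triangleRel (F : Type) [Field F]
    (t t' : (Fin 2 → F) × (Fin 2 → F) × (Fin 2 → F)) : Prop :=
  ∃ (τ : Fin 2 → F) (O : Matrix (Fin 2) (Fin 2) F),
    Oᵀ * O = 1 ∧ O.det = 1 ∧
    t'.1 = O.mulVec t.1 + τ ∧ t'.2.1 = O.mulVec t.2.1 + τ ∧
    t'.2.2 = O.mulVec t.2.2 + τ

/-- squared distance -/
def sqd {F : Type} [Field F] (x y : Fin 2 → F) : F := (x 0 - y 0) ^ 2 + (x 1 - y 1) ^ 2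

lemma two_ne_zero_of_odd (F : Type) [Field F] [Fintype F] (h : Odd (Fintype.card F)) :
    (2 : F) ≠ 0 := by
  have := FiniteField.odd_card_of_char_ne_two (F := F)
  intro h2
  have hc : ringChar F = 2 := by
    have hd : ringChar F ∣ 2 := by
      apply ringChar.dvd
      exact_mod_cast h2
    rcases (Nat.dvd_prime Nat.prime_two).1 hd with h1 | h1
    · exact absurd h1 (CharP.ringChar_ne_one)
    · exact h1
  have := FiniteField.even_card_of_char_two hc
  rw [Nat.odd_iff] at h
  omega

open Classical in
lemma bisector_card {F : Type} [Field F] [Fintype F] (h2 : (2 : F) ≠ 0) (y z : Fin 2 → F)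
    (hyz : y ≠ z) :
    (Finset.univ.filter (fun x : Fin 2 → F => sqd x y = sqd x z)).card ≤ Fintype.card F := by
  have hne : y 0 ≠ z 0 ∨ y 1 ≠ z 1 := by
    by_contra! h
    apply hyz
    funext i
    fin_cases i
    · exact h.1
    · exact h.2
  rw [← Finset.card_univ (α := F)]
  rcases hne with h | h
  · apply Finset.card_le_card_of_injOn (fun x => x 1) (by simp)
    intro a ha b hb hab
    replace ha := (Finset.mem_filter.1 (Finset.mem_coe.1 ha)).2
    replace hb := (Finset.mem_filter.1 (Finset.mem_coe.1 hb)).2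
    simp only [sqd] at ha hb hab
    have h0 : (2 * (y 0 - z 0)) * (a 0 - b 0) = 0 := by
      rw [hab] at ha
      linear_combination hb - ha
    have h3 : a 0 - b 0 = 0 := by
      rcases mul_eq_zero.1 h0 with h4 | h4
      · exact absurd h4 (mul_ne_zero h2 (sub_ne_zero.2 h))
      · exact h4
    funext i
    fin_cases i
    · exact sub_eq_zero.1 h3
    · exact hab
  · apply Finset.card_le_card_of_injOn (fun x => x 0) (by simp)
    intro a ha b hb hab
    replace ha := (Finset.mem_filter.1 (Finset.mem_coe.1 ha)).2
    replace hb := (Finset.mem_filter.1 (Finset.mem_coe.1 hb)).2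
    simp only [sqd] at ha hb hab
    have h0 : (2 * (y 1 - z 1)) * (a 1 - b 1) = 0 := by
      rw [hab] at ha
      linear_combination hb - ha
    have h3 : a 1 - b 1 = 0 := by
      rcases mul_eq_zero.1 h0 with h4 | h4
      · exact absurd h4 (mul_ne_zero h2 (sub_ne_zero.2 h))
      · exact h4
    funext i
    fin_cases i
    · exact hab
    · exact sub_eq_zero.1 h3

open Classical in
/-- number of points of `E` at distance `s` from `x`. -/
noncomputable def nu {F : Type} [Field F] (E : Finset (Fin 2 → F)) (x : Fin 2 → F) (s : F) : ℝ :=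
  ∑ y ∈ E, if sqd x y = s then 1 else 0

lemma nu_sum {F : Type} [Field F] [Fintype F] (E : Finset (Fin 2 → F)) (x : Fin 2 → F) :
    ∑ s, nu E x s = E.card := by
  classical
  unfold nu
  rw [Finset.sum_comm]
  simp

open Classical in
lemma nu_sq_sum {F : Type} [Field F] [Fintype F] (E : Finset (Fin 2 → F)) (x : Fin 2 → F) :
    ∑ s, nu E x s ^ 2 = ∑ y ∈ E, ∑ z ∈ E, if sqd x y = sqd x z then (1 : ℝ) else 0 := by
  unfold nu
  simp_rw [sq, Finset.sum_mul_sum]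
  rw [Finset.sum_comm]
  refine Finset.sum_congr rfl fun y _ => ?_
  rw [Finset.sum_comm]
  refine Finset.sum_congr rfl fun z _ => ?_
  simp [eq_comm]

lemma total_sq {F : Type} [Field F] [Fintype F] (h2 : (2 : F) ≠ 0) (E : Finset (Fin 2 → F)) :
    ∑ x, ∑ s, nu E x s ^ 2 ≤
      E.card * (Fintype.card F : ℝ) ^ 2 + (E.card : ℝ) ^ 2 * Fintype.card F := by
  classical
  simp_rw [nu_sq_sum]
  rw [Finset.sum_comm]
  have key : ∀ y ∈ E, ∑ x : Fin 2 → F, ∑ z ∈ E, (if sqd x y = sqd x z then (1 : ℝ) else 0) ≤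
      (Fintype.card F : ℝ) ^ 2 + E.card * (Fintype.card F : ℝ) := by
    intro y hy
    rw [Finset.sum_comm]
    have : ∀ z ∈ E, ∑ x : Fin 2 → F, (if sqd x y = sqd x z then (1 : ℝ) else 0) ≤
        (if z = y then (Fintype.card F : ℝ) ^ 2 else 0) + Fintype.card F := by
      intro z hz
      by_cases h : z = y
      · subst h
        simp
      · have := bisector_card h2 y z (Ne.symm h)
        rw [Finset.sum_boole]
        simp only [h, if_false, zero_add]
        exact_mod_cast this
    refine (Finset.sum_le_sum this).trans ?_
    rw [Finset.sum_add_distrib]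
    simp [hy]
  refine (Finset.sum_le_sum key).trans ?_
  simp
  apply le_of_eq
  ring

lemma exists_pin {F : Type} [Field F] [Fintype F] (h2 : (2 : F) ≠ 0) (E : Finset (Fin 2 → F))
    (hE : E.Nonempty) :
    ∃ x ∈ E, ∑ s, nu E x s ^ 2 ≤ (E.card : ℝ) ^ 2 / Fintype.card F + (Fintype.card F : ℝ) ^ 2 := by
  classical
  have hq : (0 : ℝ) < Fintype.card F := by exact_mod_cast Fintype.card_pos
  set q : ℝ := (Fintype.card F : ℝ) with hqdef
  set e : ℝ := (E.card : ℝ) with hedef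
  have hvar : ∀ x, ∑ s, (nu E x s - e / q) ^ 2 = ∑ s, nu E x s ^ 2 - e ^ 2 / q := by
    intro x
    have : ∀ s, (nu E x s - e / q) ^ 2 = nu E x s ^ 2 - (2 * e / q) * nu E x s + (e / q) ^ 2 := by
      intro s; ring
    simp_rw [this]
    rw [Finset.sum_add_distrib, Finset.sum_sub_distrib, ← Finset.mul_sum, nu_sum]
    simp only [Finset.sum_const, Finset.card_univ, nsmul_eq_mul, ← hqdef, ← hedef]
    field_simp
    ring
  have htot : ∑ x ∈ E, ∑ s, (nu E x s - e / q) ^ 2 ≤ ∑ x ∈ E, q ^ 2 := by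
    calc ∑ x ∈ E, ∑ s, (nu E x s - e / q) ^ 2 ≤ ∑ x, ∑ s, (nu E x s - e / q) ^ 2 := by
          apply Finset.sum_le_univ_sum_of_nonneg
          intro x
          positivity
      _ = ∑ x, ∑ s, nu E x s ^ 2 - q ^ 2 * (e ^ 2 / q) := by
          simp_rw [hvar]
          rw [Finset.sum_sub_distrib]
          simp [hqdef]
      _ ≤ (e * q ^ 2 + e ^ 2 * q) - q ^ 2 * (e ^ 2 / q) := by
          have := total_sq h2 E
          linarith
      _ = e * q ^ 2 := by field_simp; ring
      _ = _ := by simp [hedef]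
  obtain ⟨x, hx, h⟩ := Finset.exists_le_of_sum_le hE htot
  refine ⟨x, hx, ?_⟩
  rw [hvar] at h
  linarith

open Classical in
lemma support_bound {F : Type} [Field F] [Fintype F] (E : Finset (Fin 2 → F)) (x : Fin 2 → F) :
    (E.card : ℝ) ^ 2 ≤ (E.image (sqd x)).card * ∑ s, nu E x s ^ 2 := by
  have h1 : (E.card : ℝ) = ∑ s ∈ E.image (sqd x), nu E x s := by
    rw [← nu_sum E x]
    symm
    apply Finset.sum_subset (Finset.subset_univ _)
    intro s _ hs
    unfold nu
    apply Finset.sum_eq_zero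
    intro y hy
    rw [if_neg]
    rintro rfl
    exact hs (Finset.mem_image_of_mem _ hy)
  rw [h1]
  refine (sq_sum_le_card_mul_sum_sq (s := E.image (sqd x)) (f := fun s => nu E x s)).trans ?_
  gcongr
  exact Finset.subset_univ _

/-- Invariant of triples. -/
def triInv {F : Type} [Field F] (t : (Fin 2 → F) × (Fin 2 → F) × (Fin 2 → F)) : F × F × F :=
  (sqd t.1 t.2.1,
    (t.2.1 0 - t.1 0) * (t.2.2 0 - t.1 0) + (t.2.1 1 - t.1 1) * (t.2.2 1 - t.1 1),
    (t.2.1 0 - t.1 0) * (t.2.2 1 - t.1 1) - (t.2.1 1 - t.1 1) * (t.2.2 0 - t.1 0))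

lemma triInv_rel {F : Type} [Field F] (t t' : (Fin 2 → F) × (Fin 2 → F) × (Fin 2 → F))
    (h : triangleRel F t t') : triInv t = triInv t' := by
  obtain ⟨x, y, z⟩ := t
  obtain ⟨x', y', z'⟩ := t'
  obtain ⟨τ, O, hO, hdet, hx, hy, hz⟩ := h
  simp only at hx hy hz
  subst hx hy hz
  have h00 := congrFun (congrFun hO 0) 0
  have h01 := congrFun (congrFun hO 0) 1
  have h11 := congrFun (congrFun hO 1) 1
  simp [Matrix.mul_apply, Fin.sum_univ_two] at h00 h01 h11
  rw [Matrix.det_fin_two] at hdet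
  simp only [triInv, sqd, Matrix.mulVec, dotProduct, Fin.sum_univ_two, Pi.add_apply, Prod.mk.injEq]
  refine ⟨?_, ?_, ?_⟩
  · linear_combination -(x 0 - y 0) ^ 2 * h00 - (x 1 - y 1) ^ 2 * h11
      - 2 * (x 0 - y 0) * (x 1 - y 1) * h01
  · linear_combination -(y 0 - x 0) * (z 0 - x 0) * h00 - (y 1 - x 1) * (z 1 - x 1) * h11
      - ((y 0 - x 0) * (z 1 - x 1) + (y 1 - x 1) * (z 0 - x 0)) * h01
  · linear_combination -((y 0 - x 0) * (z 1 - x 1) - (y 1 - x 1) * (z 0 - x 0)) * hdet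

lemma triInv_inj {F : Type} [Field F] (x y z z' : Fin 2 → F) (h : sqd x y ≠ 0)
    (he : triInv (x, y, z) = triInv (x, y, z')) : z = z' := by
  simp only [triInv, Prod.mk.injEq, true_and] at he
  obtain ⟨h1, h3⟩ := he
  have e0 : sqd x y * (z 0 - z' 0) = 0 := by
    unfold sqd
    linear_combination (y 0 - x 0) * h1 - (y 1 - x 1) * h3
  have e1 : sqd x y * (z 1 - z' 1) = 0 := by
    unfold sqd
    linear_combination (y 1 - x 1) * h1 + (y 0 - x 0) * h3
  funext i
  fin_cases i
  · exact sub_eq_zero.1 ((mul_eq_zero.1 e0).resolve_left h)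
  · exact sub_eq_zero.1 ((mul_eq_zero.1 e1).resolve_left h)

open Classical in
lemma tri_count {F : Type} [Field F] [Fintype F] (E : Finset (Fin 2 → F)) (x : Fin 2 → F)
    (hx : x ∈ E) :
    ((E.image (sqd x)).erase 0).card * E.card ≤
      Set.ncard (Quot.mk (triangleRel F) ''
        ((E : Set (Fin 2 → F)) ×ˢ ((E : Set (Fin 2 → F)) ×ˢ (E : Set (Fin 2 → F))))) := by
  have hy : ∀ t : F, ∃ y, t ∈ (E.image (sqd x)).erase 0 → y ∈ E ∧ sqd x y = t := by
    intro t
    by_cases h : t ∈ (E.image (sqd x)).erase 0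
    · obtain ⟨y, hy, hyt⟩ := Finset.mem_image.1 (Finset.mem_of_mem_erase h)
      exact ⟨y, fun _ => ⟨hy, hyt⟩⟩
    · exact ⟨x, fun h' => absurd h' h⟩
  choose Y hY using hy
  rw [← Finset.card_product, ← Set.ncard_coe_finset]
  apply Set.ncard_le_ncard_of_injOn (fun p => Quot.mk (triangleRel F) (x, Y p.1, p.2))
  · rintro ⟨t, z⟩ h
    simp only [Finset.coe_product, Set.mem_prod, Finset.mem_coe] at h
    exact ⟨(x, Y t, z), ⟨hx, (hY t h.1).1, h.2⟩, rfl⟩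
  · rintro ⟨t, z⟩ h ⟨t', z'⟩ h' heq
    simp only [Finset.coe_product, Set.mem_prod, Finset.mem_coe] at h h'
    have hl := congrArg (Quot.lift triInv triInv_rel) heq
    change triInv (x, Y t, z) = triInv (x, Y t', z') at hl
    have htt : t = t' := by
      have := congrArg Prod.fst hl
      change sqd x (Y t) = sqd x (Y t') at this
      rwa [(hY t h.1).2, (hY t' h'.1).2] at this
    subst htt
    have hne : sqd x (Y t) ≠ 0 := by
      rw [(hY t h.1).2]
      exact Finset.ne_of_mem_erase h.1
    rw [triInv_inj x (Y t) z z' hne hl]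

theorem stmt_0 :
    ∃ C > (0 : ℝ), ∃ c > (0 : ℝ),
      ∀ (F : Type) [Field F] [Fintype F], Odd (Fintype.card F) →
        ∀ (E : Set (Fin 2 → F)) (ρ : ℝ),
          C / Real.sqrt (Fintype.card F) ≤ ρ → ρ ≤ 1 →
          ρ * (Fintype.card F : ℝ) ^ 2 ≤ (E.ncard : ℝ) →
          c * ρ * (Fintype.card F : ℝ) ^ 3 <
            (Set.ncard (Quot.mk (triangleRel F) '' (E ×ˢ (E ×ˢ E))) : ℝ) := by
  refine ⟨2, by norm_num, 1 / 2, by norm_num, ?_⟩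
  intro F _ _ hodd E ρ hρ hρ1 hE
  classical
  have h2 := two_ne_zero_of_odd F hodd
  obtain ⟨E, rfl⟩ : ∃ E' : Finset (Fin 2 → F), E = E' := ⟨E.toFinset, by simp⟩
  rw [Set.ncard_coe_finset] at hE
  have hq : (0 : ℝ) < Fintype.card F := by exact_mod_cast Fintype.card_pos
  have hT := tri_count E
  have hpin := exists_pin h2 E
  have hsup := support_bound E
  set q : ℝ := (Fintype.card F : ℝ) with hqdef
  set e : ℝ := (E.card : ℝ) with hedef
  have hs : 0 < Real.sqrt q := Real.sqrt_pos.2 hq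
  have hss : Real.sqrt q ^ 2 = q := Real.sq_sqrt hq.le
  have hρ0 : 0 < ρ := lt_of_lt_of_le (by positivity) hρ
  have h3 : 2 ≤ ρ * Real.sqrt q := (div_le_iff₀ hs).1 hρ
  have h4 : 4 ≤ ρ ^ 2 * q := by
    have : (2:ℝ) ^ 2 ≤ (ρ * Real.sqrt q) ^ 2 := by gcongr
    rw [mul_pow, hss] at this
    linarith
  have hq4 : 4 ≤ q := by
    have : ρ ^ 2 ≤ 1 := pow_le_one₀ hρ0.le hρ1
    nlinarith
  have he0 : 0 < e := lt_of_lt_of_le (by positivity) hE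
  have he2 : 4 * q ^ 3 ≤ e ^ 2 := by
    have h5 : (ρ * q ^ 2) ^ 2 ≤ e ^ 2 := by gcongr
    have h6 : 4 * q ^ 3 ≤ (ρ ^ 2 * q) * q ^ 3 := by gcongr
    nlinarith
  have hne : E.Nonempty := by
    rw [← Finset.card_pos]
    rw [hedef] at he0
    exact_mod_cast he0
  obtain ⟨x, hx, hxs⟩ := hpin hne
  have hA := hsup x
  have hT := hT x hx
  set a : ℝ := ((E.image (sqd x)).card : ℝ) with ha
  have hb : a - 1 ≤ (((E.image (sqd x)).erase 0).card : ℝ) := by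
    have := Finset.pred_card_le_card_erase (s := E.image (sqd x)) (a := 0)
    have h' : (E.image (sqd x)).card ≤ ((E.image (sqd x)).erase 0).card + 1 := by omega
    have h'' : a ≤ (((E.image (sqd x)).erase 0).card : ℝ) + 1 := by
      rw [ha]
      exact_mod_cast h'
    linarith
  have hT' : (((E.image (sqd x)).erase 0).card : ℝ) * e ≤
      (Set.ncard (Quot.mk (triangleRel F) ''
        ((E : Set (Fin 2 → F)) ×ˢ ((E : Set (Fin 2 → F)) ×ˢ (E : Set (Fin 2 → F))))) : ℝ) := by
    rw [hedef]
    exact_mod_cast hT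
  have hqq : q ^ 2 ≤ e ^ 2 / q * (1 / 4) := by
    rw [div_mul_eq_mul_div, le_div_iff₀ hq]
    linarith
  have ha5 : 4 / 5 * q ≤ a := by
    have h7 : e ^ 2 ≤ a * (e ^ 2 / q * (5 / 4)) := by
      refine hA.trans ?_
      gcongr
      linarith
    have h8 : a * (e ^ 2 / q * (5 / 4)) = e ^ 2 * (a * (5 / 4) / q) := by ring
    rw [h8] at h7
    have h9 : 1 ≤ a * (5 / 4) / q := by
      by_contra! hh
      have : 0 < e ^ 2 := by positivity
      nlinarith
    rw [le_div_iff₀ hq] at h9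
    linarith
  have hb2 : 1 / 2 * q < (((E.image (sqd x)).erase 0).card : ℝ) := by linarith
  calc 1 / 2 * ρ * q ^ 3 = (1 / 2 * q) * (ρ * q ^ 2) := by ring
    _ ≤ (1 / 2 * q) * e := by gcongr
    _ < (((E.image (sqd x)).erase 0).card : ℝ) * e := by gcongr
    _ ≤ _ := hT'
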